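/- arXiv:2201.09262 — 2 statements merged into one kernel-verified Lean document; each statement's English description precedes it below -/
import Mathlib

section
/- For all nonnegative integers n and b, ∫₀^(π/2) cos^(2n+1)(x) · x^(2b)/(2b)! dx = 4^n/((2n+1)·C(2n,n)) · Σ_{n < m₁ < ... < m_b} 1/((2m₁+1)² ⋯ (2m_b+1)²), where the empty sum (b = 0) equals 1. -/
open Real

/-- `∑_{n < m₁ < ⋯ < m_b} 1/((2m₁+1)² ⋯ (2m_b+1)²)`; equals `1` when `b = 0`. -/
noncomputable def tTail (b n : ℕ) : ℝ :=
  ∑' f : {f : Fin b → ℕ // StrictMono f ∧ ∀ i, n < f i},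
    ∏ i, 1 / (2 * (f.1 i : ℝ) + 1) ^ 2

/-!
Integrating by parts twice moves the second derivative of `x ^ (m + 2) / (m + 2)!` onto
`cos ^ (p + 2)`, and `(cos ^ (p + 2))'' = (p + 2) (p + 1) cos ^ p - (p + 2) ^ 2 cos ^ (p + 2)`.
So, writing `R p m` for the average of `x ^ m / m!` over `[0, π / 2]` with weight `cos ^ p`,
`R p (m + 2) - R (p + 2) (m + 2) = R (p + 2) m / (p + 2) ^ 2`. Jordan's inequality
`x ≤ π / 2 * sin x` gives `R p (m + 2) = O(1 / p)`, so telescoping along `p = 2 n + r` expresses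
`R (2 n + r) (2 b + 2)` as `∑_{m > n} R (2 m + r) (2 b) / (2 m + r) ^ 2`. This is the recursion
satisfied by the nested sums, obtained by splitting off the smallest index. The weight
`cos ^ (2 n + 1)` has total mass `4 ^ n / ((2 n + 1) C(2n, n))`, a Wallis integral.
-/

open Filter Topology
open scoped Nat

section NestedSums

variable {α : Type*} [Preorder α]

/-- Increasing `b`-tuples `a < m₁ < ⋯ < m_b`, the index type of the nested sums. -/
abbrev StrictMonoAbove (b : ℕ) (a : α) : Type _ :=
  {f : Fin b → α // StrictMono f ∧ ∀ i, a < f i}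

instance StrictMonoAbove.uniqueZero (a : α) : Unique (StrictMonoAbove 0 a) where
  default := ⟨Fin.elim0, Subsingleton.strictMono _, fun i => i.elim0⟩
  uniq _ := Subsingleton.elim _ _

/-- Splitting off the smallest entry of an increasing tuple. -/
def StrictMonoAbove.consEquiv (b : ℕ) (a : α) :
    (Σ m : Set.Ioi a, StrictMonoAbove b m.1) ≃ StrictMonoAbove (b + 1) a where
  toFun p := ⟨Fin.cons p.1.1 p.2.1, Fin.strictMono_cons.2 ⟨p.2.2.2, p.2.2.1⟩,
    Fin.cases p.1.2 fun i => p.1.2.trans (p.2.2.2 i)⟩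
  invFun f := ⟨⟨f.1 0, f.2.2 0⟩, Fin.tail f.1,
    f.2.1.comp Fin.strictMono_succ, fun i => f.2.1 i.succ_pos⟩
  left_inv _ := rfl
  right_inv f := Subtype.ext (Fin.cons_self_tail f.1)

theorem StrictMonoAbove.prod_consEquiv {M : Type*} [CommMonoid M] (w : α → M) {b : ℕ} {a : α}
    (m : Set.Ioi a) (f : StrictMonoAbove b m.1) :
    ∏ i, w ((StrictMonoAbove.consEquiv b a ⟨m, f⟩).1 i) = w m * ∏ i, w (f.1 i) :=
  Fin.prod_univ_succ _

theorem hasSum_prod_strictMonoAbove {w : α → ℝ} (hw : ∀ a, 0 ≤ w a) {S : ℕ → α → ℝ}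
    (h_zero : ∀ a, S 0 a = 1)
    (h_succ : ∀ b a, HasSum (fun m : Set.Ioi a => w m * S b m) (S (b + 1) a)) (b : ℕ) (a : α) :
    HasSum (fun f : StrictMonoAbove b a => ∏ i, w (f.1 i)) (S b a) := by
  induction b generalizing a with
  | zero => simp [h_zero]
  | succ b ih =>
    rw [← (StrictMonoAbove.consEquiv b a).hasSum_iff]
    have h_fiber (m : Set.Ioi a) :
        HasSum (fun f => ∏ i, w ((StrictMonoAbove.consEquiv b a ⟨m, f⟩).1 i)) (w m * S b m) := by
      simpa only [StrictMonoAbove.prod_consEquiv] using (ih m.1).mul_left (w m)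
    refine (h_succ b a).sigma_of_hasSum h_fiber ((summable_sigma_of_nonneg fun _ => ?_).2
      ⟨fun m => (h_fiber m).summable, ?_⟩)
    · exact Finset.prod_nonneg fun i _ => hw _
    · exact (h_succ b a).summable.congr fun m => (h_fiber m).tsum_eq.symm

end NestedSums

section Telescoping

/-- The shift `k ↦ n + k + 1` as an enumeration of the naturals above `n`. -/
def natEquivIoi (n : ℕ) : ℕ ≃ Set.Ioi n where
  toFun k := ⟨n + k + 1, by simp⟩
  invFun m := m - (n + 1)
  left_inv k := by simp
  right_inv m := Subtype.ext (by have : n < m := m.2; dsimp only; omega)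

theorem hasSum_Ioi_of_sub_eq {u g : ℕ → ℝ} {a : ℝ} (hg : ∀ n, 0 ≤ g n)
    (hu : Tendsto u atTop (𝓝 a)) (h_sub : ∀ n, u n - u (n + 1) = g (n + 1)) (n : ℕ) :
    HasSum (fun m : Set.Ioi n => g m) (u n - a) := by
  have h_partial (K : ℕ) :
      ∑ k ∈ Finset.range K, g (n + k + 1) = u n - u (K + n) := by
    simp_rw [← h_sub, add_assoc, Finset.sum_range_sub' fun k => u (n + k), add_zero, add_comm n]
  refine (natEquivIoi n).hasSum_iff.1 ((hasSum_iff_tendsto_nat_of_nonneg (fun _ => hg _) _).2 ?_)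
  exact (((tendsto_add_atTop_iff_nat n).2 hu).const_sub (u n)).congr fun K => (h_partial K).symm

end Telescoping

section CosinePowers

theorem integral_cos_pow_add_two (p : ℕ) :
    (p + 2) * ∫ x in (0 : ℝ)..π / 2, cos x ^ (p + 2) =
      (p + 1) * ∫ x in (0 : ℝ)..π / 2, cos x ^ p := by
  rw [integral_cos_pow, cos_pi_div_two, sin_zero]
  field_simp
  simp

theorem integral_cos_pow_odd (n : ℕ) :
    ∫ x in (0 : ℝ)..π / 2, cos x ^ (2 * n + 1) =
      4 ^ n / ((2 * (n : ℝ) + 1) * (Nat.choose (2 * n) n : ℝ)) := by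
  rw [← Nat.centralBinom_eq_two_mul_choose,
    eq_div_iff (by have := Nat.centralBinom_pos n; positivity)]
  induction n with
  | zero => simp
  | succ n ih =>
    have h_rec := integral_cos_pow_add_two (2 * n + 1)
    have h_binom : ((n : ℝ) + 1) * (n + 1).centralBinom = 2 * (2 * n + 1) * n.centralBinom :=
      mod_cast Nat.succ_mul_centralBinom_succ n
    rw [show 2 * (n + 1) + 1 = 2 * n + 1 + 2 by ring]
    push_cast at h_rec ⊢
    linear_combination ((n + 1).centralBinom : ℝ) * h_rec +
      2 * (∫ x in (0 : ℝ)..π / 2, cos x ^ (2 * n + 1)) * h_binom + 4 * ih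

end CosinePowers

section CosineMoments

/-- The `m`-th moment, divided by `m!`, of the measure `cos x ^ p dx` on `[0, π / 2]`. -/
noncomputable def cosMoment (p m : ℕ) : ℝ :=
  ∫ x in (0 : ℝ)..π / 2, cos x ^ p * (x ^ m / m !)

/-- The moment `cosMoment` of the measure `cos x ^ p dx` normalised to total mass `1`. -/
noncomputable def cosMomentRatio (p m : ℕ) : ℝ :=
  cosMoment p m / cosMoment p 0

theorem cosMoment_zero_right (p : ℕ) : cosMoment p 0 = ∫ x in (0 : ℝ)..π / 2, cos x ^ p := by
  simp [cosMoment]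

theorem cosMoment_zero_right_pos (p : ℕ) : 0 < cosMoment p 0 :=
  cosMoment_zero_right p ▸ EulerSine.integral_cos_pow_pos p

theorem cosMoment_add_two_zero_right (p : ℕ) :
    (p + 2) * cosMoment (p + 2) 0 = (p + 1) * cosMoment p 0 := by
  simpa only [cosMoment_zero_right] using integral_cos_pow_add_two p

theorem cosMoment_nonneg (p m : ℕ) : 0 ≤ cosMoment p m := by
  refine intervalIntegral.integral_nonneg (by positivity) fun x hx => ?_
  have h_cos : 0 ≤ cos x := cos_nonneg_of_neg_pi_div_two_le_of_le (by linarith [hx.1, pi_pos]) hx.2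
  have h_x : 0 ≤ x := hx.1
  positivity

theorem hasDerivAt_pow_succ_div_factorial (m : ℕ) (x : ℝ) :
    HasDerivAt (fun x : ℝ => x ^ (m + 1) / (m + 1)!) (x ^ m / m !) x := by
  refine ((hasDerivAt_pow (m + 1) x).div_const _).congr_deriv ?_
  rw [Nat.factorial_succ]
  push_cast [add_tsub_cancel_right]
  field_simp

theorem integral_mul_pow_div_factorial {u u' : ℝ → ℝ} {a : ℝ}
    (hu : ∀ x, HasDerivAt u (u' x) x) (hu' : Continuous u') (hua : u a = 0) (m : ℕ) :
    ∫ x in (0 : ℝ)..a, u x * (x ^ m / m !) =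
      -∫ x in (0 : ℝ)..a, u' x * (x ^ (m + 1) / (m + 1)!) := by
  rw [intervalIntegral.integral_mul_deriv_eq_deriv_mul (fun x _ => hu x)
    (fun x _ => hasDerivAt_pow_succ_div_factorial m x) (hu'.intervalIntegrable _ _)
    (Continuous.intervalIntegrable (by fun_prop) _ _)]
  simp [hua]

theorem hasDerivAt_cos_pow_succ (p : ℕ) (x : ℝ) :
    HasDerivAt (fun x => cos x ^ (p + 1)) (-(p + 1) * (cos x ^ p * sin x)) x := by
  refine ((hasDerivAt_cos x).fun_pow (p + 1)).congr_deriv ?_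
  push_cast [add_tsub_cancel_right]
  ring

theorem hasDerivAt_cos_pow_succ_mul_sin (p : ℕ) (x : ℝ) :
    HasDerivAt (fun x => cos x ^ (p + 1) * sin x)
      ((p + 2) * cos x ^ (p + 2) - (p + 1) * cos x ^ p) x := by
  refine ((hasDerivAt_cos_pow_succ p x).fun_mul (hasDerivAt_sin x)).congr_deriv ?_
  linear_combination -(p + 1) * cos x ^ p * sin_sq x

theorem cosMoment_succ_left (p m : ℕ) :
    cosMoment (p + 1) m =
      (p + 1) * ∫ x in (0 : ℝ)..π / 2, cos x ^ p * sin x * (x ^ (m + 1) / (m + 1)!) := by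
  rw [cosMoment, integral_mul_pow_div_factorial (hasDerivAt_cos_pow_succ p) (by fun_prop)
    (by simp), ← intervalIntegral.integral_neg, ← intervalIntegral.integral_const_mul]
  congr with x
  ring

theorem integral_cos_pow_succ_mul_sin_mul_pow (p m : ℕ) :
    ∫ x in (0 : ℝ)..π / 2, cos x ^ (p + 1) * sin x * (x ^ m / m !) =
      (p + 1) * cosMoment p (m + 1) - (p + 2) * cosMoment (p + 2) (m + 1) := by
  rw [integral_mul_pow_div_factorial (hasDerivAt_cos_pow_succ_mul_sin p) (by fun_prop) (by simp),
    cosMoment, cosMoment, ← intervalIntegral.integral_neg,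
    ← intervalIntegral.integral_const_mul, ← intervalIntegral.integral_const_mul,
    ← intervalIntegral.integral_sub (Continuous.intervalIntegrable (by fun_prop) _ _)
      (Continuous.intervalIntegrable (by fun_prop) _ _)]
  congr with x
  ring

theorem cosMoment_add_two_left (p m : ℕ) :
    cosMoment (p + 2) m =
      (p + 2) * ((p + 1) * cosMoment p (m + 2) - (p + 2) * cosMoment (p + 2) (m + 2)) := by
  rw [cosMoment_succ_left, integral_cos_pow_succ_mul_sin_mul_pow]
  push_cast
  ring

theorem cosMomentRatio_sub_cosMomentRatio_add_two (p m : ℕ) :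
    cosMomentRatio p (m + 2) - cosMomentRatio (p + 2) (m + 2) =
      1 / ((p : ℝ) + 2) ^ 2 * cosMomentRatio (p + 2) m := by
  have h_pos := cosMoment_zero_right_pos (p + 2)
  have h_mass : cosMoment p 0 = (p + 2) * cosMoment (p + 2) 0 / (p + 1) := by
    rw [cosMoment_add_two_zero_right]
    field_simp
  rw [cosMomentRatio, cosMomentRatio, cosMomentRatio, cosMoment_add_two_left p m, h_mass]
  field_simp

theorem pow_div_factorial_le_mul_sin_sq {x : ℝ} (hx₀ : 0 ≤ x) (hx : x ≤ π / 2) (m : ℕ) :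
    x ^ (m + 2) / (m + 2)! ≤ (π / 2) ^ (m + 2) * sin x ^ 2 := by
  have h_jordan : x ≤ π / 2 * sin x := by
    have h := mul_le_sin hx₀ hx
    field_simp at h ⊢
    linarith
  calc x ^ (m + 2) / (m + 2)! ≤ x ^ (m + 2) :=
        div_le_self (by positivity) (mod_cast (m + 2).factorial_pos)
    _ = x ^ m * x ^ 2 := pow_add x m 2
    _ ≤ (π / 2) ^ m * (π / 2 * sin x) ^ 2 := by gcongr
    _ = (π / 2) ^ (m + 2) * sin x ^ 2 := by ring

theorem cosMoment_add_two_right_le (p m : ℕ) :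
    cosMoment p (m + 2) ≤ (π / 2) ^ (m + 2) * (cosMoment p 0 - cosMoment (p + 2) 0) := by
  rw [cosMoment_zero_right, cosMoment_zero_right, ← intervalIntegral.integral_sub
    (Continuous.intervalIntegrable (by fun_prop) _ _)
    (Continuous.intervalIntegrable (by fun_prop) _ _), ← intervalIntegral.integral_const_mul]
  refine intervalIntegral.integral_mono_on (by positivity)
    (Continuous.intervalIntegrable (by fun_prop) _ _)
    (Continuous.intervalIntegrable (by fun_prop) _ _) fun x hx => ?_
  have h_cos : 0 ≤ cos x := cos_nonneg_of_neg_pi_div_two_le_of_le (by linarith [hx.1, pi_pos]) hx.2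
  calc cos x ^ p * (x ^ (m + 2) / (m + 2)!) ≤ cos x ^ p * ((π / 2) ^ (m + 2) * sin x ^ 2) := by
        gcongr
        exact pow_div_factorial_le_mul_sin_sq hx.1 hx.2 m
    _ = (π / 2) ^ (m + 2) * (cos x ^ p - cos x ^ (p + 2)) := by
        rw [sin_sq]
        ring

theorem cosMomentRatio_nonneg (p m : ℕ) : 0 ≤ cosMomentRatio p m :=
  div_nonneg (cosMoment_nonneg p m) (cosMoment_nonneg p 0)

theorem cosMomentRatio_zero_right (p : ℕ) : cosMomentRatio p 0 = 1 :=
  div_self (cosMoment_zero_right_pos p).ne'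

theorem cosMomentRatio_add_two_right_le (p m : ℕ) :
    cosMomentRatio p (m + 2) ≤ (π / 2) ^ (m + 2) / (p + 2) := by
  rw [cosMomentRatio, div_le_iff₀ (cosMoment_zero_right_pos p)]
  refine (cosMoment_add_two_right_le p m).trans_eq ?_
  field_simp
  linear_combination -cosMoment_add_two_zero_right p

theorem tendsto_cosMomentRatio_add_two_right (m : ℕ) :
    Tendsto (fun p => cosMomentRatio p (m + 2)) atTop (𝓝 0) := by
  refine squeeze_zero (fun p => cosMomentRatio_nonneg p _)
    (fun p => cosMomentRatio_add_two_right_le p m) (Tendsto.const_div_atTop ?_ _)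
  exact tendsto_atTop_add_const_right _ _ tendsto_natCast_atTop_atTop

theorem hasSum_Ioi_cosMomentRatio (r m n : ℕ) :
    HasSum (fun k : Set.Ioi n => 1 / (2 * (k : ℝ) + r) ^ 2 * cosMomentRatio (2 * k + r) m)
      (cosMomentRatio (2 * n + r) (m + 2)) := by
  have h_tendsto : Tendsto (fun k => cosMomentRatio (2 * k + r) (m + 2)) atTop (𝓝 0) :=
    (tendsto_cosMomentRatio_add_two_right m).comp
      (tendsto_atTop_mono (fun k => (by omega : k ≤ 2 * k + r)) tendsto_id)
  have h_sub (k : ℕ) :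
      cosMomentRatio (2 * k + r) (m + 2) - cosMomentRatio (2 * (k + 1) + r) (m + 2) =
        1 / (2 * ((k + 1 : ℕ) : ℝ) + r) ^ 2 * cosMomentRatio (2 * (k + 1) + r) m := by
    have h_rec := cosMomentRatio_sub_cosMomentRatio_add_two (2 * k + r) m
    rw [show 2 * k + r + 2 = 2 * (k + 1) + r by ring] at h_rec
    rw [h_rec]
    push_cast
    ring
  have h_nonneg (k : ℕ) : 0 ≤ 1 / (2 * (k : ℝ) + r) ^ 2 * cosMomentRatio (2 * k + r) m :=
    mul_nonneg (by positivity) (cosMomentRatio_nonneg _ _)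
  simpa only [sub_zero] using hasSum_Ioi_of_sub_eq h_nonneg h_tendsto h_sub n

theorem hasSum_cosMomentRatio (r n b : ℕ) :
    HasSum (fun f : StrictMonoAbove b n => ∏ i, 1 / (2 * (f.1 i : ℝ) + r) ^ 2)
      (cosMomentRatio (2 * n + r) (2 * b)) :=
  hasSum_prod_strictMonoAbove (w := fun k : ℕ => 1 / (2 * (k : ℝ) + r) ^ 2)
    (S := fun b n => cosMomentRatio (2 * n + r) (2 * b)) (fun _ => by positivity)
    (fun _ => cosMomentRatio_zero_right _) (fun b n => hasSum_Ioi_cosMomentRatio r (2 * b) n) b n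

end CosineMoments

theorem cos_odd_moments_general (r n b : ℕ) :
    ∫ x in (0 : ℝ)..π / 2, cos x ^ (2 * n + r) * (x ^ (2 * b) / (2 * b)!) =
      (∫ x in (0 : ℝ)..π / 2, cos x ^ (2 * n + r)) *
        ∑' f : StrictMonoAbove b n, ∏ i, 1 / (2 * (f.1 i : ℝ) + r) ^ 2 := by
  rw [(hasSum_cosMomentRatio r n b).tsum_eq, ← cosMoment_zero_right, cosMomentRatio,
    mul_div_cancel₀ _ (cosMoment_zero_right_pos _).ne', cosMoment]

theorem cos_odd_moments (n b : ℕ) :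
    (∫ x in (0:ℝ)..(π / 2), Real.cos x ^ (2 * n + 1) *
        (x ^ (2 * b) / (Nat.factorial (2 * b)))) =
      4 ^ n / ((2 * (n : ℝ) + 1) * (Nat.choose (2 * n) n : ℝ)) * tTail b n := by
  simpa only [integral_cos_pow_odd, Nat.cast_one, tTail] using cos_odd_moments_general 1 n b
end

section
/- For every nonnegative integer a and real x with |x| ≤ 1, (2 arcsin x)^(2a+2)/(2a+2)! = Σ_{n=1}^∞ (4^n/(n² C(2n,n))) x^(2n) Σ_{n₁ < n₂ < ... < n_a < n} 1/(n₁² ⋯ n_a²), where for a = 0 the inner sum is 1. -/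
open Real

/-- `∑_{0 < n₁ < ⋯ < n_a < n} 1/(n₁² ⋯ n_a²)`; equals `1` when `a = 0`. -/
noncomputable def zetaHead (a n : ℕ) : ℝ :=
  ∑' f : {f : Fin a → ℕ // StrictMono f ∧ ∀ i, 0 < f i ∧ f i < n},
    ∏ i, 1 / ((f.1 i : ℝ)) ^ 2

/-!
Put `x = sin t` and `F k t = (2 * t) ^ (2 * k) / (2 * k)!`, so that `F (k + 1)'' = 4 * F k`, with
`F (k + 1)` and its derivative vanishing at `0`. Since `(sin ^ m)''` is
`m * (m - 1) * sin ^ (m - 2) - m ^ 2 * sin ^ m`, the recurrence for the coefficients `c k n` of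
`x ^ (2 * n)` says that the partial sums over `n ≤ N` for `k + 1` have second derivative `4` times
the partial sum over `n < N` for `k`, up to an error `4 * N ^ 2 * c (k + 1) N * sin t ^ (2 * N)`
that tends to `0` uniformly on compact subsets of `(-π / 2, π / 2)`. Integrating twice gives uniform
convergence there by induction on `k`. As all coefficients are nonnegative, Abel's theorem extends
the expansion to `|x| = 1`.
-/

open Filter Finset Topology

section Analysis

theorem tendstoUniformlyOn_of_hasDerivWithinAt {𝕜 E ι : Type*} [RCLike 𝕜] [NormedAddCommGroup E]
    [NormedSpace 𝕜 E] {l : Filter ι} {F F' : ι → 𝕜 → E} {f f' : 𝕜 → E} {s : Set 𝕜} {a : 𝕜}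
    (hs : Convex ℝ s) (hbdd : Bornology.IsBounded s) (ha : a ∈ s)
    (hF : ∀ i, ∀ x ∈ s, HasDerivWithinAt (F i) (F' i x) s x)
    (hf : ∀ x ∈ s, HasDerivWithinAt f (f' x) s x)
    (hF' : TendstoUniformlyOn F' f' l s) (hFa : Tendsto (F · a) l (𝓝 (f a))) :
    TendstoUniformlyOn F f l s := by
  obtain ⟨R, hR, hsR⟩ := hbdd.subset_closedBall_lt 0 a
  rw [Metric.tendstoUniformlyOn_iff] at hF' ⊢
  intro ε hε
  filter_upwards [hF' (ε / (2 * R)) (by positivity),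
    Metric.tendsto_nhds.1 hFa (ε / 2) (by positivity)] with i hi' hia x hx
  have hvariation : ‖(f x - F i x) - (f a - F i a)‖ ≤ ε / (2 * R) * ‖x - a‖ :=
    hs.norm_image_sub_le_of_norm_hasDerivWithin_le (f := fun y => f y - F i y)
      (fun y hy => (hf y hy).fun_sub (hF i y hy))
      (fun y hy => (dist_eq_norm (f' y) (F' i y) ▸ hi' y hy).le) ha hx
  have hxa : ‖x - a‖ ≤ R := by simpa [dist_eq_norm] using hsR hx
  rw [dist_comm, dist_eq_norm] at hia
  calc dist (f x) (F i x) = ‖((f x - F i x) - (f a - F i a)) + (f a - F i a)‖ := by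
        rw [sub_add_cancel, dist_eq_norm]
    _ ≤ ‖(f x - F i x) - (f a - F i a)‖ + ‖f a - F i a‖ := norm_add_le _ _
    _ < ε / (2 * R) * R + ε / 2 :=
        add_lt_add_of_le_of_lt (hvariation.trans (by gcongr)) hia
    _ = ε := by field_simp; ring

theorem tendstoUniformlyOn_mul_pow_zero {ι α : Type*} {l : Filter ι} {a : ι → ℝ} {e : ι → ℕ}
    {u : α → ℝ} {r : ℝ} {s : Set α} (ha : Tendsto (fun i => a i * r ^ e i) l (𝓝 0))
    (hu : ∀ t ∈ s, |u t| ≤ r) :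
    TendstoUniformlyOn (fun i t => a i * u t ^ e i) (fun _ => 0) l s := by
  rw [Metric.tendstoUniformlyOn_iff]
  intro ε hε
  filter_upwards [Metric.tendsto_nhds.1 ha ε hε] with i hi t ht
  rw [dist_zero_left]
  refine lt_of_le_of_lt ?_ (dist_zero_right (a i * r ^ e i) ▸ hi)
  have hr : |u t| ≤ |r| := (hu t ht).trans (le_abs_self r)
  simp only [norm_mul, norm_pow, Real.norm_eq_abs]
  gcongr

theorem hasSum_of_hasSum_mul_pow_of_tendsto {c : ℕ → ℝ} {g : ℝ → ℝ} {L : ℝ} (hc : ∀ n, 0 ≤ c n)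
    (hg : ∀ r ∈ Set.Ioo (0 : ℝ) 1, HasSum (fun n => c n * r ^ n) (g r))
    (hL : Tendsto g (𝓝[<] 1) (𝓝 L)) : HasSum c L := by
  have hIoo : Set.Ioo (0 : ℝ) 1 ∈ 𝓝[<] 1 := Ioo_mem_nhdsLT one_pos
  have hbound : ∀ s : Finset ℕ, ∑ n ∈ s, c n ≤ L := by
    intro s
    have hcont : Continuous fun r : ℝ => ∑ n ∈ s, c n * r ^ n := by fun_prop
    have hlim : Tendsto (fun r : ℝ => ∑ n ∈ s, c n * r ^ n) (𝓝[<] 1) (𝓝 (∑ n ∈ s, c n)) := by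
      simpa using (hcont.tendsto 1).mono_left nhdsWithin_le_nhds
    refine le_of_tendsto_of_tendsto hlim hL ?_
    filter_upwards [hIoo] with r hr
    exact sum_le_hasSum s (fun n _ => mul_nonneg (hc n) (pow_nonneg hr.1.le n)) (hg r hr)
  have hsum : Summable c := summable_of_sum_le hc hbound
  have habel : Tendsto g (𝓝[<] 1) (𝓝 (∑' n, c n)) := by
    refine (Real.tendsto_tsum_powerSeries_nhdsWithin_lt hsum.hasSum.tendsto_sum_nat).congr' ?_
    filter_upwards [hIoo] with r hr using (hg r hr).tsum_eq
  exact tendsto_nhds_unique habel hL ▸ hsum.hasSum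

theorem hasDerivAt_pow_div_factorial {𝕜 : Type*} [NontriviallyNormedField 𝕜] [CharZero 𝕜] (n : ℕ)
    (t : 𝕜) :
    HasDerivAt (fun t : 𝕜 => t ^ (n + 1) / (n + 1).factorial) (t ^ n / n.factorial) t := by
  refine ((hasDerivAt_pow (n + 1) t).div_const _).congr_deriv ?_
  rw [Nat.factorial_succ, add_tsub_cancel_right, Nat.cast_mul]
  exact mul_div_mul_left _ _ (Nat.cast_ne_zero.2 n.succ_ne_zero)

theorem hasDerivAt_two_mul_pow_div_factorial {𝕜 : Type*} [NontriviallyNormedField 𝕜] [CharZero 𝕜]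
    (n : ℕ) (t : 𝕜) :
    HasDerivAt (fun t : 𝕜 => (2 * t) ^ (n + 1) / (n + 1).factorial)
      (2 * ((2 * t) ^ n / n.factorial)) t := by
  have hlin : HasDerivAt (fun t : 𝕜 => 2 * t) 2 t := by
    simpa using (hasDerivAt_id t).const_mul 2
  exact ((hasDerivAt_pow_div_factorial n (2 * t)).comp t hlin).congr_deriv (mul_comm _ _)

theorem hasDerivAt_mul_sin_pow_mul_cos (m : ℕ) (t : ℝ) :
    HasDerivAt (fun t => m * sin t ^ (m - 1) * cos t)
      (m * (m - 1) * sin t ^ (m - 2) - m ^ 2 * sin t ^ m) t := by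
  refine ((((hasDerivAt_sin t).fun_pow (m - 1)).const_mul (m : ℝ)).fun_mul
    (hasDerivAt_cos t)).congr_deriv ?_
  match m with
  | 0 => simp
  | 1 => simp
  | m + 2 =>
    simp only [Nat.add_sub_cancel, show m + 2 - 1 = m + 1 by omega]
    push_cast
    linear_combination (m + 2) * (m + 1) * sin t ^ m * cos_sq' t

end Analysis

section SinSeries

theorem hasDerivAt_sum_mul_sin_pow (c : ℕ → ℝ) (s : Finset ℕ) (t : ℝ) :
    HasDerivAt (fun t => ∑ n ∈ s, c n * sin t ^ (2 * n))
      (∑ n ∈ s, c n * ((2 * n : ℕ) * sin t ^ (2 * n - 1) * cos t)) t :=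
  HasDerivAt.fun_sum fun n _ => ((hasDerivAt_sin t).fun_pow (2 * n)).const_mul (c n)

theorem sum_range_mul_pow_of_recurrence {R : Type*} [CommRing R] {c d : ℕ → R}
    (hcd : ∀ n : ℕ, (2 * n + 2) * (2 * n + 1) * c (n + 1) = 4 * (n : R) ^ 2 * c n + d n)
    (N : ℕ) (x : R) :
    ∑ n ∈ range (N + 1), c n * ((2 * n : ℕ) * ((2 * n : ℕ) - 1) * x ^ (2 * n - 2) -
        (2 * n : ℕ) ^ 2 * x ^ (2 * n)) =
      ∑ n ∈ range N, d n * x ^ (2 * n) - 4 * (N : R) ^ 2 * c N * x ^ (2 * N) := by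
  induction N with
  | zero => simp
  | succ N ih =>
    rw [sum_range_succ, ih, sum_range_succ, show 2 * (N + 1) - 2 = 2 * N by omega]
    push_cast
    linear_combination x ^ (2 * N) * hcd N

variable {c d : ℕ → ℝ}

theorem hasDerivAt_sum_mul_sin_pow_deriv
    (hcd : ∀ n : ℕ, (2 * n + 2) * (2 * n + 1) * c (n + 1) = 4 * (n : ℝ) ^ 2 * c n + d n)
    (N : ℕ) (t : ℝ) :
    HasDerivAt
      (fun t => ∑ n ∈ range (N + 1), c n * ((2 * n : ℕ) * sin t ^ (2 * n - 1) * cos t))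
      (∑ n ∈ range N, d n * sin t ^ (2 * n) - 4 * (N : ℝ) ^ 2 * c N * sin t ^ (2 * N)) t := by
  rw [← sum_range_mul_pow_of_recurrence hcd]
  exact HasDerivAt.fun_sum fun n _ => (hasDerivAt_mul_sin_pow_mul_cos (2 * n) t).const_mul (c n)

theorem tendstoUniformlyOn_sum_mul_sin_pow_of_recurrence {r : ℝ} {s : Set ℝ}
    {f F F' : ℝ → ℝ} (hs : Convex ℝ s) (hbdd : Bornology.IsBounded s) (h0 : 0 ∈ s)
    (hsin : ∀ t ∈ s, |sin t| ≤ r)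
    (hcd : ∀ n : ℕ, (2 * n + 2) * (2 * n + 1) * c (n + 1) = 4 * (n : ℝ) ^ 2 * c n + d n)
    (herr : Tendsto (fun n : ℕ => 4 * (n : ℝ) ^ 2 * c n * r ^ (2 * n)) atTop (𝓝 0))
    (hF : ∀ t, HasDerivAt F (F' t) t) (hF' : ∀ t, HasDerivAt F' (f t) t)
    (hF0 : F 0 = c 0) (hF'0 : F' 0 = 0)
    (hf : TendstoUniformlyOn (fun N t => ∑ n ∈ range N, d n * sin t ^ (2 * n)) f atTop s) :
    TendstoUniformlyOn (fun N t => ∑ n ∈ range N, c n * sin t ^ (2 * n)) F atTop s := by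
  have hderiv2 : TendstoUniformlyOn (fun (N : ℕ) t => ∑ n ∈ range N, d n * sin t ^ (2 * n) -
      4 * (N : ℝ) ^ 2 * c N * sin t ^ (2 * N)) f atTop s := by
    simpa [Pi.sub_def] using hf.sub (tendstoUniformlyOn_mul_pow_zero herr hsin)
  have hderiv : TendstoUniformlyOn (fun (N : ℕ) t => ∑ n ∈ range (N + 1),
      c n * ((2 * n : ℕ) * sin t ^ (2 * n - 1) * cos t)) F' atTop s := by
    refine tendstoUniformlyOn_of_hasDerivWithinAt hs hbdd h0
      (fun N t _ => (hasDerivAt_sum_mul_sin_pow_deriv hcd N t).hasDerivWithinAt)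
      (fun t _ => (hF' t).hasDerivWithinAt) hderiv2 ?_
    have hterm : ∀ n : ℕ, c n * ((2 * n : ℕ) * sin 0 ^ (2 * n - 1) * cos 0) = 0 := by
      rintro (_ | n) <;> simp [mul_add]
    simpa only [hterm, sum_const_zero, hF'0] using tendsto_const_nhds
  have hshift : TendstoUniformlyOn (fun N t => ∑ n ∈ range (N + 1), c n * sin t ^ (2 * n))
      F atTop s := by
    refine tendstoUniformlyOn_of_hasDerivWithinAt hs hbdd h0
      (fun N t _ => (hasDerivAt_sum_mul_sin_pow c (range (N + 1)) t).hasDerivWithinAt)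
      (fun t _ => (hF t).hasDerivWithinAt) hderiv ?_
    simp [hF0, sum_range_succ']
  rw [← map_add_atTop_eq_nat 1]
  exact hshift

end SinSeries

section ZetaHead

theorem zetaHead_eq_sum_powersetCard (a n : ℕ) :
    zetaHead a n = ∑ s ∈ powersetCard a (Ioo 0 n), ∏ i ∈ s, 1 / (i : ℝ) ^ 2 := by
  let e : {f : Fin a → ℕ // StrictMono f ∧ ∀ i, 0 < f i ∧ f i < n} ≃
      {s // s ∈ powersetCard a (Ioo 0 n)} :=
    { toFun f := ⟨univ.map ⟨f.1, f.2.1.injective⟩, by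
        refine mem_powersetCard.2 ⟨fun j hj => ?_, by simp⟩
        obtain ⟨i, -, rfl⟩ := mem_map.1 hj
        exact mem_Ioo.2 (f.2.2 i)⟩
      invFun s := ⟨s.1.orderEmbOfFin (mem_powersetCard.1 s.2).2, OrderEmbedding.strictMono _,
        fun i => mem_Ioo.1 ((mem_powersetCard.1 s.2).1 (orderEmbOfFin_mem _ _ i))⟩
      left_inv f := Subtype.ext
        (orderEmbOfFin_unique _ (fun i => mem_map_of_mem _ (mem_univ i)) f.2.1).symm
      right_inv s := Subtype.ext (coe_injective (by simp)) }
  rw [zetaHead, ← Finset.tsum_subtype, ← e.tsum_eq]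
  exact tsum_congr fun f => (prod_map univ ⟨f.1, f.2.1.injective⟩ fun i : ℕ => 1 / (i : ℝ) ^ 2).symm

theorem zetaHead_zero (n : ℕ) : zetaHead 0 n = 1 := by
  simp [zetaHead_eq_sum_powersetCard]

theorem zetaHead_eq_zero_of_le {a n : ℕ} (ha : a ≠ 0) (h : n ≤ a) : zetaHead a n = 0 := by
  rw [zetaHead_eq_sum_powersetCard, powersetCard_eq_empty.2, sum_empty]
  rw [Nat.card_Ioo]
  omega

theorem zetaHead_succ {n : ℕ} (hn : 0 < n) (a : ℕ) :
    zetaHead (a + 1) (n + 1) = zetaHead (a + 1) n + zetaHead a n / (n : ℝ) ^ 2 := by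
  have hIoo : Ioo 0 (n + 1) = insert n (Ioo 0 n) := by
    ext j
    simp only [mem_Ioo, mem_insert]
    omega
  have hnot : ∀ s ∈ powersetCard a (Ioo 0 n), n ∉ s := fun s hs hns =>
    right_notMem_Ioo ((mem_powersetCard.1 hs).1 hns)
  simp only [zetaHead_eq_sum_powersetCard]
  rw [hIoo, powersetCard_succ_insert right_notMem_Ioo, sum_union, sum_image, sum_div]
  · congr 1
    refine sum_congr rfl fun s hs => ?_
    rw [prod_insert (hnot s hs)]
    ring
  · exact fun s hs t ht hst => by
      rw [← erase_insert (hnot s hs), ← erase_insert (hnot t ht), hst]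
  · refine disjoint_left.2 fun s hs hs' => ?_
    obtain ⟨t, -, rfl⟩ := mem_image.1 hs'
    exact right_notMem_Ioo ((mem_powersetCard.1 hs).1 (mem_insert_self n t))

theorem zetaHead_nonneg (a n : ℕ) : 0 ≤ zetaHead a n :=
  tsum_nonneg fun _ => prod_nonneg fun _ _ => by positivity

theorem zetaHead_le_pow (a n : ℕ) : zetaHead a n ≤ (n : ℝ) ^ a := by
  have hprod : ∀ s ∈ powersetCard a (Ioo 0 n), ∏ i ∈ s, 1 / (i : ℝ) ^ 2 ≤ 1 := fun s _ =>
    prod_le_one (fun _ _ => by positivity) fun i _ => by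
      rw [one_div, ← Nat.cast_pow]
      exact Nat.cast_inv_le_one (i ^ 2)
  calc zetaHead a n ≤ (n - 1).choose a := by
        simpa [zetaHead_eq_sum_powersetCard] using sum_le_card_nsmul _ _ 1 hprod
    _ ≤ n.choose a := by exact_mod_cast Nat.choose_le_choose a (n.sub_le 1)
    _ ≤ (n : ℝ) ^ a := by exact_mod_cast n.choose_le_pow a

end ZetaHead

section Coefficients

/-- The coefficient `4 ^ n / (n ^ 2 * C(2n, n))` of `x ^ (2 * n)` in the expansion of
`2 * arcsin x ^ 2`; at `n = 0` it has the correct value `0` by division by zero. -/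
noncomputable def arcsinSqCoeff (n : ℕ) : ℝ :=
  4 ^ n / ((n : ℝ) ^ 2 * (Nat.choose (2 * n) n : ℝ))

/-- The coefficient of `x ^ (2 * n)` in the expansion of `(2 * arcsin x) ^ (2 * k) / (2 * k)!`. -/
noncomputable def arcsinPowCoeff : ℕ → ℕ → ℝ
  | 0, n => if n = 0 then 1 else 0
  | k + 1, n => arcsinSqCoeff n * zetaHead k n

theorem arcsinSqCoeff_zero : arcsinSqCoeff 0 = 0 := by simp [arcsinSqCoeff]

theorem arcsinSqCoeff_one : arcsinSqCoeff 1 = 2 := by norm_num [arcsinSqCoeff]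

theorem arcsinSqCoeff_nonneg (n : ℕ) : 0 ≤ arcsinSqCoeff n := by
  unfold arcsinSqCoeff
  positivity

theorem arcsinSqCoeff_succ {n : ℕ} (hn : 0 < n) :
    (2 * n + 2) * (2 * n + 1) * arcsinSqCoeff (n + 1) = 4 * (n : ℝ) ^ 2 * arcsinSqCoeff n := by
  have hbinom : ((n : ℝ) + 1) * (n + 1).centralBinom = 2 * (2 * n + 1) * n.centralBinom := by
    exact_mod_cast Nat.succ_mul_centralBinom_succ n
  have hpos : (0 : ℝ) < n.centralBinom := by exact_mod_cast n.centralBinom_pos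
  have hpos' : (0 : ℝ) < (n + 1).centralBinom := by exact_mod_cast (n + 1).centralBinom_pos
  simp only [arcsinSqCoeff, ← Nat.centralBinom_eq_two_mul_choose]
  push_cast
  rw [← mul_div_assoc, ← mul_div_assoc, div_eq_div_iff (by positivity) (by positivity)]
  linear_combination (-4 * (n + 1) * (4 : ℝ) ^ n * n ^ 2) * hbinom

theorem sq_mul_arcsinSqCoeff_le (n : ℕ) : (n : ℝ) ^ 2 * arcsinSqCoeff n ≤ 2 * n := by
  rcases n.eq_zero_or_pos with rfl | hn
  · simp
  have hpos : (0 : ℝ) < n.centralBinom := by exact_mod_cast n.centralBinom_pos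
  have hcancel : (n : ℝ) ^ 2 * arcsinSqCoeff n = 4 ^ n / n.centralBinom := by
    rw [arcsinSqCoeff, ← Nat.centralBinom_eq_two_mul_choose]
    field_simp
  rw [hcancel, div_le_iff₀ hpos]
  exact_mod_cast Nat.four_pow_le_two_mul_self_mul_centralBinom n hn

theorem arcsinPowCoeff_nonneg (k n : ℕ) : 0 ≤ arcsinPowCoeff k n := by
  cases k with
  | zero => unfold arcsinPowCoeff; positivity
  | succ k => exact mul_nonneg (arcsinSqCoeff_nonneg n) (zetaHead_nonneg k n)

theorem arcsinPowCoeff_succ_zero (k : ℕ) : arcsinPowCoeff (k + 1) 0 = 0 := by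
  simp [arcsinPowCoeff, arcsinSqCoeff_zero]

theorem arcsinPowCoeff_recurrence (k n : ℕ) :
    (2 * n + 2) * (2 * n + 1) * arcsinPowCoeff (k + 1) (n + 1) =
      4 * (n : ℝ) ^ 2 * arcsinPowCoeff (k + 1) n + 4 * arcsinPowCoeff k n := by
  rcases n.eq_zero_or_pos with rfl | hn
  · cases k with
    | zero => norm_num [arcsinPowCoeff, arcsinSqCoeff_one, zetaHead_zero]
    | succ k =>
      simp [arcsinPowCoeff, arcsinSqCoeff_zero, zetaHead_eq_zero_of_le]
  · cases k with
    | zero => simpa [arcsinPowCoeff, zetaHead_zero, hn.ne'] using arcsinSqCoeff_succ hn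
    | succ k =>
      simp only [arcsinPowCoeff, zetaHead_succ hn]
      rw [← mul_assoc, arcsinSqCoeff_succ hn]
      field_simp

theorem sq_mul_arcsinPowCoeff_succ_le (k n : ℕ) :
    (n : ℝ) ^ 2 * arcsinPowCoeff (k + 1) n ≤ 2 * (n : ℝ) ^ (k + 1) :=
  calc (n : ℝ) ^ 2 * arcsinPowCoeff (k + 1) n
      = (n : ℝ) ^ 2 * arcsinSqCoeff n * zetaHead k n := (mul_assoc _ _ _).symm
    _ ≤ 2 * n * (n : ℝ) ^ k :=
        mul_le_mul (sq_mul_arcsinSqCoeff_le n) (zetaHead_le_pow k n) (zetaHead_nonneg k n)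
          (by positivity)
    _ = 2 * (n : ℝ) ^ (k + 1) := by ring

theorem tendsto_sq_mul_arcsinPowCoeff_mul_pow (k : ℕ) {r : ℝ} (hr : |r| < 1) :
    Tendsto (fun n : ℕ => 4 * (n : ℝ) ^ 2 * arcsinPowCoeff (k + 1) n * r ^ (2 * n)) atTop
      (𝓝 0) := by
  have hr2 : |r ^ 2| < 1 := by
    rw [abs_pow]
    exact pow_lt_one₀ (abs_nonneg r) hr two_ne_zero
  have hdom : Tendsto (fun n : ℕ => 8 * ((n : ℝ) ^ (k + 1) * (r ^ 2) ^ n)) atTop (𝓝 0) := by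
    simpa using (tendsto_pow_const_mul_const_pow_of_abs_lt_one (k + 1) hr2).const_mul 8
  refine squeeze_zero (fun n => ?_) (fun n => ?_) hdom
  · have := arcsinPowCoeff_nonneg (k + 1) n
    rw [pow_mul]
    positivity
  · rw [pow_mul]
    have := mul_le_mul_of_nonneg_right (sq_mul_arcsinPowCoeff_succ_le k n)
      (pow_nonneg (sq_nonneg r) n)
    linarith

end Coefficients

section Expansion

theorem tendstoUniformlyOn_sum_arcsinPowCoeff_mul_sin_pow {r : ℝ} {s : Set ℝ} (hs : Convex ℝ s)
    (hbdd : Bornology.IsBounded s) (h0 : 0 ∈ s) (hr : r < 1) (hsin : ∀ t ∈ s, |sin t| ≤ r)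
    (k : ℕ) :
    TendstoUniformlyOn (fun N t => ∑ n ∈ range N, arcsinPowCoeff k n * sin t ^ (2 * n))
      (fun t => (2 * t) ^ (2 * k) / (2 * k).factorial) atTop s := by
  induction k with
  | zero =>
    have hconst : TendstoUniformlyOn (fun (_ : ℕ) (_ : ℝ) => (1 : ℝ)) (fun _ => 1) atTop s :=
      fun u hu => by simp [refl_mem_uniformity hu]
    refine (hconst.congr ?_).congr_right fun t _ => by simp
    filter_upwards [eventually_gt_atTop 0] with N hN t _
    simp [arcsinPowCoeff, ite_mul, hN]
  | succ k ih =>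
    have hr' : |r| < 1 := by
      rwa [abs_of_nonneg ((abs_nonneg _).trans (hsin 0 h0))]
    have hderiv2 (t : ℝ) :
        HasDerivAt (fun t : ℝ => 2 * ((2 * t) ^ (2 * k + 1) / (2 * k + 1).factorial))
          (4 * ((2 * t) ^ (2 * k) / (2 * k).factorial)) t :=
      ((hasDerivAt_two_mul_pow_div_factorial (2 * k) t).const_mul 2).congr_deriv (by ring)
    have hfour : TendstoUniformlyOn
        (fun N t => ∑ n ∈ range N, 4 * arcsinPowCoeff k n * sin t ^ (2 * n))
        (fun t => 4 * ((2 * t) ^ (2 * k) / (2 * k).factorial)) atTop s := by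
      simpa [Function.comp_def, mul_sum, mul_assoc] using
        (uniformContinuous_const_smul (4 : ℝ)).comp_tendstoUniformlyOn ih
    exact tendstoUniformlyOn_sum_mul_sin_pow_of_recurrence hs hbdd h0 hsin
      (arcsinPowCoeff_recurrence k) (tendsto_sq_mul_arcsinPowCoeff_mul_pow k hr')
      (hasDerivAt_two_mul_pow_div_factorial (2 * k + 1)) hderiv2
      (by simp [arcsinPowCoeff_succ_zero]) (by simp) hfour

theorem hasSum_arcsinPowCoeff_of_abs_lt_one (k : ℕ) {x : ℝ} (hx : |x| < 1) :
    HasSum (fun n => arcsinPowCoeff k n * x ^ (2 * n))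
      ((2 * arcsin x) ^ (2 * k) / (2 * k).factorial) := by
  have hx' := abs_le.1 hx.le
  have hnonneg : ∀ n, 0 ≤ arcsinPowCoeff k n * x ^ (2 * n) := fun n =>
    mul_nonneg (arcsinPowCoeff_nonneg k n) ((even_two_mul n).pow_nonneg x)
  have hsin : ∀ t ∈ Set.Icc (-arcsin |x|) (arcsin |x|), |sin t| ≤ |x| := by
    intro t ht
    have ht' : |t| ≤ arcsin |x| := abs_le.2 ht
    have hle := arcsin_le_pi_div_two |x|
    calc |sin t| = sin |t| := abs_sin_eq_sin_abs_of_abs_le_pi (by linarith [pi_pos])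
      _ ≤ sin (arcsin |x|) :=
          sin_le_sin_of_le_of_le_pi_div_two (by linarith [pi_pos, abs_nonneg t]) hle ht'
      _ = |x| := sin_arcsin (by linarith [abs_nonneg x]) hx.le
  have hmem : arcsin x ∈ Set.Icc (-arcsin |x|) (arcsin |x|) := by
    rw [← arcsin_neg]
    exact ⟨monotone_arcsin (neg_abs_le x), monotone_arcsin (le_abs_self x)⟩
  have hzero : (0 : ℝ) ∈ Set.Icc (-arcsin |x|) (arcsin |x|) := by simp [arcsin_nonneg]
  rw [hasSum_iff_tendsto_nat_of_nonneg hnonneg]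
  simpa only [sin_arcsin hx'.1 hx'.2] using
    (tendstoUniformlyOn_sum_arcsinPowCoeff_mul_sin_pow (convex_Icc _ _) (Metric.isBounded_Icc _ _)
      hzero hx hsin k).tendsto_at hmem

theorem hasSum_arcsinPowCoeff (k : ℕ) {x : ℝ} (hx : |x| ≤ 1) :
    HasSum (fun n => arcsinPowCoeff k n * x ^ (2 * n))
      ((2 * arcsin x) ^ (2 * k) / (2 * k).factorial) := by
  refine hasSum_of_hasSum_mul_pow_of_tendsto
    (g := fun r => (2 * arcsin (√r * x)) ^ (2 * k) / (2 * k).factorial)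
    (fun n => mul_nonneg (arcsinPowCoeff_nonneg k n) ((even_two_mul n).pow_nonneg x))
    (fun r hr => ?_) ?_
  · have hlt : |√r * x| < 1 := by
      rw [abs_mul, abs_of_nonneg (sqrt_nonneg r)]
      exact mul_lt_one_of_nonneg_of_lt_one_left (sqrt_nonneg r)
        ((sqrt_lt' one_pos).2 (by simpa using hr.2)) hx
    refine (hasSum_arcsinPowCoeff_of_abs_lt_one k hlt).congr_fun fun n => ?_
    rw [mul_pow, pow_mul √r, sq_sqrt hr.1.le]
    ring
  · have hcont : Continuous fun r : ℝ => (2 * arcsin (√r * x)) ^ (2 * k) / (2 * k).factorial := by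
      fun_prop
    simpa using (hcont.tendsto 1).mono_left nhdsWithin_le_nhds

end Expansion

theorem arcsin_even_powers (a : ℕ) (x : ℝ) (hx : |x| ≤ 1) :
    (2 * Real.arcsin x) ^ (2 * a + 2) / (Nat.factorial (2 * a + 2)) =
      ∑' n : ℕ+, (4 ^ (n : ℕ) / ((n : ℝ) ^ 2 * (Nat.choose (2 * n) n : ℝ))) *
        x ^ (2 * (n : ℕ)) * zetaHead a n := by
  have hsum := hasSum_arcsinPowCoeff (a + 1) hx
  calc (2 * arcsin x) ^ (2 * a + 2) / (2 * a + 2).factorial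
      = ∑' n : ℕ, arcsinPowCoeff (a + 1) n * x ^ (2 * n) := hsum.tsum_eq.symm
    _ = ∑' n : ℕ, arcsinPowCoeff (a + 1) (n + 1) * x ^ (2 * (n + 1)) := by
        rw [hsum.summable.tsum_eq_zero_add, arcsinPowCoeff_succ_zero, zero_mul, zero_add]
    _ = ∑' n : ℕ+, arcsinPowCoeff (a + 1) n * x ^ (2 * (n : ℕ)) :=
        (tsum_pnat_eq_tsum_succ (f := fun n => arcsinPowCoeff (a + 1) n * x ^ (2 * n))).symm
    _ = _ := tsum_congr fun n => mul_right_comm _ _ _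
end
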